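/- Let η₀, θ₀ be Schwartz functions on ℝ^d with all moments vanishing (∫ x^α η₀(x) dx = 0 for all multi-indices α), and define η_j(x) = 2^{jd} η₀(2^j x), θ_j(x) = 2^{jd} θ₀(2^j x) for j ≥ 1. Then for any M, N ≥ 0 there is C = C(η₀, θ₀, M, N) > 0 such that ∫_{ℝ^d} |η_j * θ_k(x)| (1 + 2^{max(j,k)}|x|)^N dx ≤ C·2^{-M|j-k|} for all j, k ∈ ℕ. -/

import Mathlib

open MeasureTheory

section Helpers

theorem aux_taylor {d : ℕ} (g : SchwartzMap (EuclideanSpace ℝ (Fin d)) ℝ) (n : ℕ) :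
    ∃ C : ℝ, 0 ≤ C ∧ ∀ x y : EuclideanSpace ℝ (Fin d),
      |g (x + y) - ∑ k ∈ Finset.range (n + 1),
        ((Nat.factorial k : ℕ) : ℝ)⁻¹ • (iteratedFDeriv ℝ k g x (fun _ => y))| ≤ C * ‖y‖ ^ (n + 1) := by
  obtain ⟨C, hC, hb⟩ := g.decay 0 (n + 1)
  refine ⟨C, hC.le, fun x y => ?_⟩
  have hg : ContDiff ℝ (n + 1) g := by exact_mod_cast g.smooth (n + 1)
  rw [map_add_eq_sum_add_integral_iteratedFDeriv (f := g) (x := x) (y := y) (n := n)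
    (fun t _ => hg.contDiffAt), add_sub_cancel_left, smul_eq_mul, abs_mul]
  have h1 : |((Nat.factorial n : ℕ) : ℝ)⁻¹| ≤ 1 := by
    rw [abs_of_nonneg (by positivity)]
    apply inv_le_one_of_one_le₀
    exact_mod_cast Nat.factorial_pos n
  have h2 : ‖∫ t in (0:ℝ)..1, (1 - t)^n • iteratedFDeriv ℝ (n + 1) g (x + t • y) (fun _ ↦ y)‖
      ≤ (C * ‖y‖ ^ (n + 1)) * |(1:ℝ) - 0| := by
    apply intervalIntegral.norm_integral_le_of_norm_le_const
    intro t ht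
    rw [Set.uIoc_of_le zero_le_one] at ht
    rw [norm_smul]
    have h3 : ‖(1 - t) ^ n‖ ≤ 1 := by
      rw [norm_pow]
      apply pow_le_one₀ (norm_nonneg _)
      rw [Real.norm_eq_abs, abs_le]
      constructor <;> linarith [ht.1, ht.2]
    have h4 : ‖iteratedFDeriv ℝ (n + 1) g (x + t • y) (fun _ ↦ y)‖ ≤ C * ‖y‖ ^ (n + 1) := by
      refine (ContinuousMultilinearMap.le_opNorm _ _).trans ?_
      have := hb (x + t • y)
      simp only [pow_zero, one_mul] at this
      simp only [Finset.prod_const, Finset.card_univ, Fintype.card_fin]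
      gcongr
    calc _ ≤ 1 * (C * ‖y‖ ^ (n + 1)) := by gcongr
      _ = _ := one_mul _
  rw [sub_zero, abs_one, mul_one, Real.norm_eq_abs] at h2
  calc _ ≤ 1 * (C * ‖y‖ ^ (n + 1)) := by gcongr
    _ = _ := one_mul _

theorem aux_moment_int {d : ℕ} (θ : SchwartzMap (EuclideanSpace ℝ (Fin d)) ℝ) (n : ℕ)
    (P : EuclideanSpace ℝ (Fin d) → ℝ) (hP : Continuous P) (C : ℝ)
    (hb : ∀ z, |P z| ≤ C * ‖z‖ ^ n) : Integrable (fun z => P z * θ z) := by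
  refine ((θ.integrable_pow_mul volume n).const_mul C).mono'
    (hP.mul θ.continuous).aestronglyMeasurable (Filter.Eventually.of_forall fun z => ?_)
  rw [norm_mul, ← mul_assoc]
  exact mul_le_mul_of_nonneg_right (hb z) (norm_nonneg _)

theorem aux_moment {d : ℕ} (θ : SchwartzMap (EuclideanSpace ℝ (Fin d)) ℝ)
    (hθ : ∀ α : Fin d → ℕ, ∫ x : EuclideanSpace ℝ (Fin d), (∏ i, x i ^ α i) * θ x = 0) (n : ℕ)
    (T : ContinuousMultilinearMap ℝ (fun _ : Fin n => EuclideanSpace ℝ (Fin d)) ℝ) :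
    Integrable (fun z => T (fun _ => z) * θ z) ∧ ∫ z, T (fun _ => z) * θ z = 0 := by
  constructor
  · refine aux_moment_int θ n _ (by fun_prop) ‖T‖ fun z => ?_
    simpa using T.le_opNorm (fun _ => z)
  · let e : Fin d → EuclideanSpace ℝ (Fin d) := fun i => EuclideanSpace.single i 1
    have hz : ∀ z : EuclideanSpace ℝ (Fin d), z = ∑ i, z i • e i := by
      intro z
      ext j
      simp [e, Pi.single_apply]
    have hT : ∀ z : EuclideanSpace ℝ (Fin d), T (fun _ => z) * θ z
        = ∑ r : Fin n → Fin d, T (fun i => e (r i)) * ((∏ i, z (r i)) * θ z) := by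
      intro z
      have h1 : T (fun _ => z) = ∑ r : Fin n → Fin d, (∏ i, z (r i)) * T (fun i => e (r i)) := by
        conv_lhs => rw [hz z]
        rw [T.map_sum (fun _ j => z j • e j)]
        refine Finset.sum_congr rfl fun r _ => ?_
        rw [T.map_smul_univ (fun i => z (r i)) (fun i => e (r i)), smul_eq_mul]
      rw [h1, Finset.sum_mul]
      exact Finset.sum_congr rfl fun r _ => by ring
    simp_rw [hT]
    rw [integral_finsetSum]
    · refine Finset.sum_eq_zero fun r _ => ?_
      rw [integral_const_mul]
      have := hθ (fun j => (Finset.univ.filter (fun i => r i = j)).card)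
      have h2 : ∀ z : EuclideanSpace ℝ (Fin d),
          ∏ j, z j ^ (Finset.univ.filter (fun i => r i = j)).card = ∏ i, z (r i) := by
        intro z
        rw [← Finset.prod_fiberwise_of_maps_to (s := Finset.univ) (t := Finset.univ) (g := r)
          (fun _ _ => Finset.mem_univ _) (fun i => z (r i))]
        refine Finset.prod_congr rfl fun j _ => ?_
        rw [Finset.prod_congr rfl (g := fun _ => z j), Finset.prod_const]
        intro i hi
        rw [(Finset.mem_filter.1 hi).2]
      simp_rw [h2] at this
      rw [this, mul_zero]
    · intro r _
      apply Integrable.const_mul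
      refine aux_moment_int θ n _ (by fun_prop) 1 fun z => ?_
      rw [Finset.abs_prod, one_mul]
      calc ∏ i, |z (r i)| ≤ ∏ i : Fin n, ‖z‖ :=
            Finset.prod_le_prod (fun _ _ => abs_nonneg _) fun i _ => PiLp.norm_apply_le z (r i)
        _ = ‖z‖ ^ n := by simp

theorem aux_int {d : ℕ} (g θ : SchwartzMap (EuclideanSpace ℝ (Fin d)) ℝ)
    (s : ℝ) (u : EuclideanSpace ℝ (Fin d)) :
    Integrable (fun z => g (s • (u - z)) * θ z) := by
  obtain ⟨C, hC, hb⟩ := g.decay 0 0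
  refine aux_moment_int θ 0 _ (by fun_prop) C fun z => ?_
  simpa using hb (s • (u - z))

theorem aux_small {d : ℕ} (g θ : SchwartzMap (EuclideanSpace ℝ (Fin d)) ℝ)
    (hθ : ∀ α : Fin d → ℕ, ∫ x : EuclideanSpace ℝ (Fin d), (∏ i, x i ^ α i) * θ x = 0) (n : ℕ) :
    ∃ C : ℝ, 0 ≤ C ∧ ∀ (s : ℝ) (u : EuclideanSpace ℝ (Fin d)), 0 ≤ s →
      |∫ z, g (s • (u - z)) * θ z| ≤ C * s ^ (n + 1) := by
  obtain ⟨C, hC, hb⟩ := aux_taylor g n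
  refine ⟨C * ∫ z, ‖z‖ ^ (n + 1) * ‖θ z‖, by positivity, fun s u hs => ?_⟩
  have hP : ∀ z : EuclideanSpace ℝ (Fin d), (∑ k ∈ Finset.range (n + 1),
        ((Nat.factorial k : ℕ) : ℝ)⁻¹ • (iteratedFDeriv ℝ k g (s • u) (fun _ => -(s • z)))) * θ z =
      ∑ k ∈ Finset.range (n + 1), (((Nat.factorial k : ℕ) : ℝ)⁻¹ * (-s) ^ k) *
        (iteratedFDeriv ℝ k g (s • u) (fun _ => z) * θ z) := by
    intro z
    rw [Finset.sum_mul]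
    refine Finset.sum_congr rfl fun k _ => ?_
    have : (fun _ : Fin k => -(s • z)) = fun _ : Fin k => (-s) • z := by simp
    rw [this, ContinuousMultilinearMap.map_smul_univ _ (fun _ => -s) (fun _ => z)]
    simp only [Finset.prod_const, Finset.card_univ, Fintype.card_fin, smul_eq_mul]
    ring
  have hI : ∀ k ∈ Finset.range (n + 1), Integrable (fun z => (((Nat.factorial k : ℕ) : ℝ)⁻¹ * (-s) ^ k) *
        (iteratedFDeriv ℝ k g (s • u) (fun _ => z) * θ z)) :=
    fun k _ => (aux_moment θ hθ k _).1.const_mul _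
  have h0 : ∫ z, (∑ k ∈ Finset.range (n + 1), (((Nat.factorial k : ℕ) : ℝ)⁻¹ * (-s) ^ k) *
        (iteratedFDeriv ℝ k g (s • u) (fun _ => z) * θ z)) = 0 := by
    rw [integral_finsetSum _ hI]
    refine Finset.sum_eq_zero fun k _ => ?_
    rw [integral_const_mul, (aux_moment θ hθ k _).2, mul_zero]
  rw [← sub_zero (∫ z, g (s • (u - z)) * θ z), ← h0,
    ← integral_sub (aux_int g θ s u) (integrable_finsetSum _ hI), ← Real.norm_eq_abs]
  have : C * (∫ z, ‖z‖ ^ (n + 1) * ‖θ z‖) * s ^ (n + 1)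
      = ∫ z, (C * s ^ (n + 1)) * (‖z‖ ^ (n + 1) * ‖θ z‖) := by
    rw [integral_const_mul]; ring
  rw [this]
  refine norm_integral_le_of_norm_le ((θ.integrable_pow_mul volume (n + 1)).const_mul _)
    (Filter.Eventually.of_forall fun z => ?_)
  rw [← hP z, ← sub_mul, norm_mul]
  have h3 := hb (s • u) (-(s • z))
  rw [show s • u + -(s • z) = s • (u - z) by rw [smul_sub, sub_eq_add_neg], norm_neg, norm_smul,
    Real.norm_of_nonneg hs, mul_pow] at h3
  calc _ ≤ (C * (s ^ (n + 1) * ‖z‖ ^ (n + 1))) * ‖θ z‖ :=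
        mul_le_mul_of_nonneg_right h3 (norm_nonneg _)
    _ = _ := by ring

theorem aux_decay {d : ℕ} (g θ : SchwartzMap (EuclideanSpace ℝ (Fin d)) ℝ) (K : ℕ) :
    ∃ C : ℝ, 0 ≤ C ∧ ∀ (s : ℝ) (u : EuclideanSpace ℝ (Fin d)), 0 < s → s ≤ 1 →
      (s * (1 + ‖u‖)) ^ K * |∫ z, g (s • (u - z)) * θ z| ≤ C := by
  obtain ⟨C, hC, hb⟩ : ∃ C : ℝ, 0 ≤ C ∧ ∀ x, (1 + ‖x‖) ^ K * ‖g x‖ ≤ C := by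
    refine ⟨_, ?_, fun x => by
      simpa using SchwartzMap.one_add_le_sup_seminorm_apply (𝕜 := ℝ) (m := (K, 0)) le_rfl le_rfl g x⟩
    positivity
  have hint : Integrable (fun z => (1 + ‖z‖) ^ K * ‖θ z‖) := by
    have : (fun z => (1 + ‖z‖) ^ K * ‖θ z‖) = fun z => ∑ m ∈ Finset.range (K + 1),
        ((K.choose m : ℕ) : ℝ) * (‖z‖ ^ m * ‖θ z‖) := by
      ext z
      rw [add_comm, add_pow, Finset.sum_mul]
      exact Finset.sum_congr rfl fun m _ => by simp; ring
    rw [this]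
    exact integrable_finsetSum _ fun m _ => (θ.integrable_pow_mul volume m).const_mul _
  refine ⟨C * ∫ z, (1 + ‖z‖) ^ K * ‖θ z‖, by positivity, fun s u hs hs1 => ?_⟩
  have hpos : 0 ≤ (s * (1 + ‖u‖)) ^ K := by positivity
  rw [← abs_of_nonneg hpos, ← abs_mul, ← integral_const_mul, ← integral_const_mul,
    ← Real.norm_eq_abs]
  refine norm_integral_le_of_norm_le (hint.const_mul _) (Filter.Eventually.of_forall fun z => ?_)
  rw [norm_mul, norm_mul, Real.norm_of_nonneg hpos]
  have h1 : s * (1 + ‖u‖) ≤ (1 + ‖s • (u - z)‖) * (1 + ‖z‖) := by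
    rw [norm_smul, Real.norm_of_nonneg hs.le]
    have h2 : ‖u‖ ≤ ‖u - z‖ + ‖z‖ := by simpa using norm_add_le (u - z) z
    nlinarith [norm_nonneg z, norm_nonneg (u - z), mul_nonneg (norm_nonneg z) (norm_nonneg (u - z)),
      mul_nonneg hs.le (mul_nonneg (norm_nonneg z) (norm_nonneg (u - z))),
      mul_le_mul_of_nonneg_left h2 hs.le, mul_le_mul_of_nonneg_right hs1 (norm_nonneg z)]
  calc _ ≤ ((1 + ‖s • (u - z)‖) * (1 + ‖z‖)) ^ K * (‖g (s • (u - z))‖ * ‖θ z‖) := by gcongr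
    _ = ((1 + ‖s • (u - z)‖) ^ K * ‖g (s • (u - z))‖) * ((1 + ‖z‖) ^ K * ‖θ z‖) := by
        rw [mul_pow]; ring
    _ ≤ C * ((1 + ‖z‖) ^ K * ‖θ z‖) := by
        gcongr
        exact hb _

theorem aux_main {d : ℕ} (g θ : SchwartzMap (EuclideanSpace ℝ (Fin d)) ℝ)
    (hθ : ∀ α : Fin d → ℕ, ∫ x : EuclideanSpace ℝ (Fin d), (∏ i, x i ^ α i) * θ x = 0)
    (M N : ℝ) :
    ∃ C : ℝ, 0 < C ∧ ∀ s : ℝ, 0 < s → s ≤ 1 →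
      ∫ u, |∫ z, g (s • (u - z)) * θ z| * (1 + ‖u‖) ^ N ≤ C * s ^ M := by
  obtain ⟨m, hm⟩ := exists_nat_ge M
  obtain ⟨p, hp⟩ := exists_nat_ge (N + d + 1)
  obtain ⟨A, hA, hA'⟩ := aux_small g θ hθ (2 * p + 2 * m)
  obtain ⟨B, hB, hB'⟩ := aux_decay g θ (2 * p)
  have hint : Integrable (fun u : EuclideanSpace ℝ (Fin d) => (1 + ‖u‖) ^ (-((p : ℝ) - N))) := by
    apply integrable_one_add_norm
    simp only [finrank_euclideanSpace, Fintype.card_fin]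
    linarith
  set I := ∫ u : EuclideanSpace ℝ (Fin d), (1 + ‖u‖) ^ (-((p : ℝ) - N)) with hI
  have hI0 : 0 ≤ I := integral_nonneg fun u => by positivity
  refine ⟨Real.sqrt (A * B) * I + 1, by positivity, fun s hs hs1 => ?_⟩
  have key : ∀ u, |∫ z, g (s • (u - z)) * θ z| * (1 + ‖u‖) ^ N
      ≤ (Real.sqrt (A * B) * s ^ M) * (1 + ‖u‖) ^ (-((p : ℝ) - N)) := by
    intro u
    have hu : 0 < 1 + ‖u‖ := by positivity
    set F := |∫ z, g (s • (u - z)) * θ z|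
    have hF : 0 ≤ F := abs_nonneg _
    have h1 : F ≤ A * s ^ (2 * p + 2 * m + 1) := hA' s u hs.le
    have h2 : (s * (1 + ‖u‖)) ^ (2 * p) * F ≤ B := hB' s u hs hs1
    have h3 : ((1 + ‖u‖) ^ p * F) ^ 2 ≤ (Real.sqrt (A * B) * s ^ m) ^ 2 := by
      rw [mul_pow (Real.sqrt _), Real.sq_sqrt (by positivity)]
      have h4 : F * ((s * (1 + ‖u‖)) ^ (2 * p) * F) ≤ A * s ^ (2 * p + 2 * m + 1) * B := by gcongr
      have h5 : s ^ (2 * p) * ((1 + ‖u‖) ^ p * F) ^ 2 ≤ s ^ (2 * p) * (A * B * (s ^ m) ^ 2) := by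
        calc _ = F * ((s * (1 + ‖u‖)) ^ (2 * p) * F) := by rw [mul_pow s]; ring
          _ ≤ A * s ^ (2 * p + 2 * m + 1) * B := h4
          _ = s ^ (2 * p) * (A * B * (s ^ m) ^ 2) * s := by ring
          _ ≤ s ^ (2 * p) * (A * B * (s ^ m) ^ 2) * 1 := by gcongr
          _ = _ := mul_one _
      exact le_of_mul_le_mul_left h5 (by positivity)
    have h6 : (1 + ‖u‖) ^ p * F ≤ Real.sqrt (A * B) * s ^ m :=
      le_of_sq_le_sq h3 (by positivity)
    have h7 : s ^ m ≤ s ^ M := by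
      rw [← Real.rpow_natCast]
      exact Real.rpow_le_rpow_of_exponent_ge hs hs1 hm
    have h8 : (1 + ‖u‖) ^ N = (1 + ‖u‖) ^ p * (1 + ‖u‖) ^ (-((p : ℝ) - N)) := by
      rw [← Real.rpow_natCast, ← Real.rpow_add hu]
      congr 1; ring
    rw [h8]
    calc _ = ((1 + ‖u‖) ^ p * F) * (1 + ‖u‖) ^ (-((p : ℝ) - N)) := by ring
      _ ≤ (Real.sqrt (A * B) * s ^ M) * (1 + ‖u‖) ^ (-((p : ℝ) - N)) := by
        refine mul_le_mul_of_nonneg_right (h6.trans ?_) (by positivity)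
        gcongr
  calc _ ≤ ∫ u, (Real.sqrt (A * B) * s ^ M) * (1 + ‖u‖) ^ (-((p : ℝ) - N)) :=
        integral_mono_of_nonneg (Filter.Eventually.of_forall fun u => by positivity)
          (hint.const_mul _) (Filter.Eventually.of_forall key)
    _ = (Real.sqrt (A * B) * I) * s ^ M := by rw [integral_const_mul, ← hI]; ring
    _ ≤ _ := by
      have : 0 ≤ s ^ M := by positivity
      gcongr; linarith

theorem aux_scaled {d : ℕ} (g θ : SchwartzMap (EuclideanSpace ℝ (Fin d)) ℝ)
    (hθ : ∀ α : Fin d → ℕ, ∫ x : EuclideanSpace ℝ (Fin d), (∏ i, x i ^ α i) * θ x = 0)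
    (M N : ℝ) :
    ∃ C : ℝ, 0 < C ∧ ∀ a b : ℝ, 0 < a → a ≤ b →
      ∫ x : EuclideanSpace ℝ (Fin d),
        |∫ y : EuclideanSpace ℝ (Fin d), (a ^ d * g (a • (x - y))) * (b ^ d * θ (b • y))|
          * (1 + b * ‖x‖) ^ N ≤ C * (a / b) ^ M := by
  obtain ⟨C, hC, h⟩ := aux_main g θ hθ M N
  refine ⟨C, hC, fun a b ha hab => ?_⟩
  have hb : 0 < b := ha.trans_le hab
  have hs1 : a / b ≤ 1 := (div_le_one hb).2 hab
  have hs : 0 < a / b := by positivity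
  have inner : ∀ x : EuclideanSpace ℝ (Fin d),
      ∫ y : EuclideanSpace ℝ (Fin d), (a ^ d * g (a • (x - y))) * (b ^ d * θ (b • y))
      = a ^ d * ∫ z, g ((a / b) • (b • x - z)) * θ z := by
    intro x
    have h1 := Measure.integral_comp_smul_of_nonneg (volume : Measure (EuclideanSpace ℝ (Fin d)))
      (fun z => g ((a / b) • (b • x - z)) * θ z) b (hR := hb.le)
    simp only [finrank_euclideanSpace, Fintype.card_fin, smul_eq_mul] at h1
    have h2 : ∀ y : EuclideanSpace ℝ (Fin d), (a / b) • (b • x - b • y) = a • (x - y) := by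
      intro y
      rw [← smul_sub, smul_smul, div_mul_cancel₀ _ hb.ne']
    simp_rw [h2] at h1
    have h3 : ∀ y : EuclideanSpace ℝ (Fin d), (a ^ d * g (a • (x - y))) * (b ^ d * θ (b • y))
        = (a ^ d * b ^ d) * (g (a • (x - y)) * θ (b • y)) := fun y => by ring
    simp_rw [h3]
    rw [integral_const_mul, h1]
    field_simp
  simp_rw [inner]
  have h1 := Measure.integral_comp_smul_of_nonneg (volume : Measure (EuclideanSpace ℝ (Fin d)))
      (fun u => |a ^ d * ∫ z, g ((a / b) • (u - z)) * θ z| * (1 + ‖u‖) ^ N) b (hR := hb.le)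
  simp only [finrank_euclideanSpace, Fintype.card_fin, smul_eq_mul, norm_smul,
    Real.norm_of_nonneg hb.le] at h1
  rw [h1]
  simp_rw [abs_mul, abs_of_nonneg (pow_nonneg ha.le d), mul_assoc]
  rw [integral_const_mul, ← mul_assoc, ← inv_pow, ← mul_pow]
  have h0 : (b⁻¹ * a) ^ d ≤ 1 := by
    rw [mul_comm, ← div_eq_mul_inv]
    exact pow_le_one₀ hs.le hs1
  calc _ ≤ 1 * ∫ u, |∫ z, g ((a / b) • (u - z)) * θ z| * (1 + ‖u‖) ^ N := by
        refine mul_le_mul_of_nonneg_right h0 (integral_nonneg fun u => ?_)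
        positivity
    _ ≤ _ := by rw [one_mul]; exact h _ hs hs1

end Helpers

/-- Almost-orthogonality estimate for dyadic dilates of moment-vanishing Schwartz
functions: with `η_j(x) = 2^{jd} η₀(2^j x)` and `θ_k(x) = 2^{kd} θ₀(2^k x)`, for any
`M, N ≥ 0` there is `C > 0` with
`∫ |η_j * θ_k(x)| (1 + 2^{max(j,k)}|x|)^N dx ≤ C 2^{-M|j-k|}` for all `j, k ∈ ℕ`. -/
theorem stmt_13 (d : ℕ) (η₀ θ₀ : SchwartzMap (EuclideanSpace ℝ (Fin d)) ℝ)
    (hη : ∀ α : Fin d → ℕ, ∫ x : EuclideanSpace ℝ (Fin d), (∏ i, x i ^ α i) * η₀ x = 0)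
    (hθ : ∀ α : Fin d → ℕ, ∫ x : EuclideanSpace ℝ (Fin d), (∏ i, x i ^ α i) * θ₀ x = 0)
    (M N : ℝ) (hM : 0 ≤ M) (hN : 0 ≤ N) :
    ∃ C : ℝ, 0 < C ∧ ∀ j k : ℕ,
      (∫ x : EuclideanSpace ℝ (Fin d),
        |∫ y : EuclideanSpace ℝ (Fin d),
            ((2 : ℝ) ^ ((j : ℝ) * d) * η₀ ((2 : ℝ) ^ (j : ℝ) • y))
              * ((2 : ℝ) ^ ((k : ℝ) * d) * θ₀ ((2 : ℝ) ^ (k : ℝ) • (x - y)))|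
          * (1 + (2 : ℝ) ^ ((max j k : ℕ) : ℝ) * ‖x‖) ^ N)
        ≤ C * (2 : ℝ) ^ (-(M * |(j : ℝ) - (k : ℝ)|)) := by
  obtain ⟨C₁, hC₁, h₁⟩ := aux_scaled η₀ θ₀ hθ M N
  obtain ⟨C₂, hC₂, h₂⟩ := aux_scaled θ₀ η₀ hη M N
  refine ⟨max C₁ C₂, lt_max_of_lt_left hC₁, fun j k => ?_⟩
  have hp : ∀ n : ℕ, (2 : ℝ) ^ ((n : ℝ) * d) = ((2 : ℝ) ^ (n : ℝ)) ^ d := fun n => by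
    rw [Real.rpow_mul (by norm_num), Real.rpow_natCast]
  simp_rw [hp]
  have hdiv : ∀ m n : ℕ, ((2 : ℝ) ^ (m : ℝ) / (2 : ℝ) ^ (n : ℝ)) ^ M
      = (2 : ℝ) ^ (-(M * ((n : ℝ) - m))) := fun m n => by
    rw [← Real.rpow_sub (by norm_num), ← Real.rpow_mul (by norm_num)]
    congr 1; ring
  rcases le_total j k with hjk | hjk
  · have hc : (j : ℝ) ≤ k := by exact_mod_cast hjk
    have h := h₁ ((2 : ℝ) ^ (j : ℝ)) ((2 : ℝ) ^ (k : ℝ)) (by positivity)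
      (Real.rpow_le_rpow_of_exponent_le (by norm_num) hc)
    rw [hdiv] at h
    rw [max_eq_right hjk, abs_sub_comm, abs_of_nonneg (sub_nonneg.2 hc)]
    refine le_trans (le_of_eq ?_) (h.trans ?_)
    · congr 1
      ext x
      rw [← integral_sub_left_eq_self _ volume x]
      simp only [sub_sub_cancel]
    · gcongr
      exact le_max_left _ _
  · have hc : (k : ℝ) ≤ j := by exact_mod_cast hjk
    have h := h₂ ((2 : ℝ) ^ (k : ℝ)) ((2 : ℝ) ^ (j : ℝ)) (by positivity)
      (Real.rpow_le_rpow_of_exponent_le (by norm_num) hc)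
    rw [hdiv] at h
    rw [max_eq_left hjk, abs_of_nonneg (sub_nonneg.2 hc)]
    refine le_trans (le_of_eq ?_) (h.trans ?_)
    · congr 1
      ext x
      congr 3
      ext y
      ring
    · gcongr
      exact le_max_right _ _
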